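/- Let R ⊆ S be an integral FCP ring extension which is t-closed. Then the contraction map Spec(S) → Spec(R), Q ↦ Q ∩ R, is bijective. -/

import Mathlib

/-!
Let `C` be the conductor of `R` in `S`, the largest ideal of `S` contained in the image of `R`.
Applying t-closedness with `r = 0` to multiples of `s`, where `s² ∈ C`, shows that `C` is radical.

Suppose first that `S` is finite over `R`. For `p ∈ R` the descending chain `R + pⁿS` stabilizes,
so `pⁿS ⊆ R + p(pⁿS)` for some `n`, and Nakayama's lemma gives `q ∈ R` with `(1 - pq)pⁿS ⊆ R`; since
`C` is radical, `p(1 - pq) ∈ C`. For `x ∈ S` the chain `R + xⁿS` provides some `p = xⁿ⁺¹(1 - xs)`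
in `R`. Then `p(1 - pq) ∈ C` has the form `xⁿ⁺¹(1 - xt)`, so `x(1 - xt) ∈ C`, again because `C` is
radical. Hence `S/C` is von Neumann regular. The element `b = xt` is idempotent modulo `C`, so
`b² - b` and `b³ - b²` lie in `C ⊆ R`, and t-closedness with `r = 1` gives `b ∈ R`.

When `S` is merely integral, this applies to the finite extension `R ⊆ R[x]`. So every `x ∈ S` can
be written as `xb + c` with `b, c ∈ R` both multiples of `x`. If `x` lies in a prime `Q₁`, then
`b, c ∈ Q₁ ∩ R`, and so `x` lies in every prime of `S` with the same contraction as `Q₁`.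
-/

/-- A maximal chain of length `n` from `T` to `U`: each step is a covering. -/
def IsMaxChainFromTo {α : Type*} [PartialOrder α] (T U : α) (n : ℕ)
    (c : Fin (n + 1) → α) : Prop :=
  c 0 = T ∧ c (Fin.last n) = U ∧ ∀ i : Fin n, c i.castSucc ⋖ c i.succ

/-- The subextension determined by `T ≤ U` is catenarian: all maximal chains from
`T` to `U` have the same length. -/
def IsCatenarianFromTo {α : Type*} [PartialOrder α] (T U : α) : Prop :=
  ∀ (n m : ℕ) (c : Fin (n + 1) → α) (d : Fin (m + 1) → α),
    IsMaxChainFromTo T U n c → IsMaxChainFromTo T U m d → n = m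

/-- The extension `R ⊆ S` has FCP: every chain of `R`-subalgebras of `S` is finite. -/
def IsFCPExt (R S : Type*) [CommRing R] [CommRing S] [Algebra R S] : Prop :=
  ∀ C : Set (Subalgebra R S), IsChain (· ≤ ·) C → C.Finite

/-- The extension `R ⊆ S` is catenarian. -/
def IsCatenarianExt (R S : Type*) [CommRing R] [CommRing S] [Algebra R S] : Prop :=
  IsCatenarianFromTo (⊥ : Subalgebra R S) ⊤

/-- The length `ℓ[T,U]`: the supremum of lengths of chains from `T` to `U`. -/
noncomputable def extLength {α : Type*} [PartialOrder α] (T U : α) : ℕ :=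
  sSup {n | ∃ c : Fin (n + 1) → α, StrictMono c ∧ c 0 = T ∧ c (Fin.last n) = U}

/-- The extension `R ⊆ S` is t-closed: `b² - rb ∈ R` and `b³ - rb² ∈ R` imply `b ∈ R`. -/
def IsTClosedExt (R S : Type*) [CommRing R] [CommRing S] [Algebra R S] : Prop :=
  ∀ (b : S) (r : R),
    b ^ 2 - algebraMap R S r * b ∈ (algebraMap R S).range →
    b ^ 3 - algebraMap R S r * b ^ 2 ∈ (algebraMap R S).range →
    b ∈ (algebraMap R S).range

theorem wellFoundedLT_of_forall_isChain_finite {α : Type*} [PartialOrder α]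
    (h : ∀ C : Set α, IsChain (· ≤ ·) C → C.Finite) : WellFoundedLT α := by
  rw [WellFoundedLT, isWellFounded_iff, RelEmbedding.wellFounded_iff_isEmpty]
  refine ⟨fun f => ?_⟩
  have hf : StrictAnti f := fun _ _ hab => f.map_rel_iff.2 hab
  refine Set.infinite_range_of_injective hf.injective (h _ ?_)
  rintro _ ⟨a, rfl⟩ _ ⟨b, rfl⟩ -
  exact (le_total b a).imp (hf.antitone ·) (hf.antitone ·)

section

variable {R S : Type*} [CommRing R] [CommRing S] [Algebra R S]

instance wellFoundedLT_subalgebra_subalgebra [WellFoundedLT (Subalgebra R S)]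
    (T : Subalgebra R S) : WellFoundedLT (Subalgebra R T) :=
  have hmono : Monotone (Subalgebra.map T.val) := fun _ _ => Subalgebra.map_mono
  (hmono.strictMono_of_injective
    (Subalgebra.map_injective Subtype.val_injective)).wellFoundedLT

/-- The subalgebra `R + I` of `S`, for an ideal `I` of `S`, encoded as the preimage of the image of
`R` in `S ⧸ I`. -/
def baseAddIdeal (R : Type*) {S : Type*} [CommRing R] [CommRing S] [Algebra R S]
    (I : Ideal S) : Subalgebra R S :=
  (⊥ : Subalgebra R (S ⧸ I)).comap (Ideal.Quotient.mkₐ R I)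

theorem mem_baseAddIdeal {I : Ideal S} {s : S} :
    s ∈ baseAddIdeal R I ↔ ∃ r : R, s - algebraMap R S r ∈ I := by
  simp only [baseAddIdeal, Subalgebra.mem_comap, Algebra.mem_bot, Set.mem_range]
  refine exists_congr fun r => ?_
  rw [← Ideal.Quotient.eq, eq_comm]
  rfl

theorem baseAddIdeal_mono : Monotone (baseAddIdeal R : Ideal S → Subalgebra R S) := by
  intro I J h s hs
  obtain ⟨r, hr⟩ := mem_baseAddIdeal.1 hs
  exact mem_baseAddIdeal.2 ⟨r, h hr⟩

theorem mem_baseAddIdeal_of_mem {I : Ideal S} {s : S} (hs : s ∈ I) : s ∈ baseAddIdeal R I :=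
  mem_baseAddIdeal.2 ⟨0, by simpa using hs⟩

variable (R) in
theorem exists_forall_pow_mul_sub_mem_range [WellFoundedLT (Subalgebra R S)] (x : S) :
    ∃ n, ∀ m ≥ n, ∀ t, ∃ s, x ^ n * t - x ^ m * s ∈ (algebraMap R S).range := by
  obtain ⟨n, hn⟩ := WellFoundedLT.antitone_chain_condition
    (f := fun n => baseAddIdeal R (Ideal.span {x ^ n})) fun a b hab =>
      baseAddIdeal_mono (Ideal.span_singleton_le_span_singleton.2 (pow_dvd_pow x hab))
  refine ⟨n, fun m hm t => ?_⟩
  have ht : x ^ n * t ∈ baseAddIdeal R (Ideal.span {x ^ m}) :=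
    hn m hm ▸ mem_baseAddIdeal_of_mem (Ideal.mem_span_singleton.2 (dvd_mul_right _ _))
  obtain ⟨r, hr⟩ := mem_baseAddIdeal.1 ht
  obtain ⟨s, hs⟩ := Ideal.mem_span_singleton.1 hr
  exact ⟨s, r, by rw [← hs, sub_sub_cancel]⟩

/-- The conductor of `R` in `S`, as an ideal of `S`: the largest ideal of `S` contained in the image
of `R`. Mathlib's `conductor R x` is the conductor of `R[x]` instead. -/
def extConductor (R S : Type*) [CommRing R] [CommRing S] [Algebra R S] : Ideal S where
  carrier := {s | ∀ t : S, s * t ∈ (algebraMap R S).range}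
  add_mem' {a b} ha hb t := by
    rw [add_mul]
    exact add_mem (ha t) (hb t)
  zero_mem' t := by
    rw [zero_mul]
    exact zero_mem _
  smul_mem' c s hs t := by
    rw [smul_eq_mul, mul_comm c s, mul_assoc]
    exact hs (c * t)

theorem mem_range_of_mem_extConductor {s : S} (hs : s ∈ extConductor R S) :
    s ∈ (algebraMap R S).range := by
  simpa using hs 1

variable (S) in
open scoped Pointwise in
theorem exists_one_sub_mul_mul_pow_mem_extConductor [Module.Finite R S]
    [WellFoundedLT (Subalgebra R S)] (p : R) :
    ∃ q n, algebraMap R S ((1 - p * q) * p ^ n) ∈ extConductor R S := by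
  obtain ⟨n, hn⟩ := exists_forall_pow_mul_sub_mem_range R (algebraMap R S p)
  let N : Submodule R S := p ^ n • ⊤
  have hN : N ≤ 1 ⊔ Ideal.span {p} • N := by
    rintro _ ⟨t, -, rfl⟩
    obtain ⟨s, r, hr⟩ := hn (n + 1) n.le_succ t
    refine Submodule.mem_sup.2 ⟨algebraMap R S r, Submodule.algebraMap_mem r, p • p ^ n • s,
      Submodule.smul_mem_smul (Ideal.mem_span_singleton_self p)
        (Submodule.smul_mem_pointwise_smul _ _ _ trivial), ?_⟩
    simp only [hr, Algebra.smul_def, map_pow, DistribSMul.toLinearMap_apply]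
    ring
  obtain ⟨g, hg, hgN⟩ := Submodule.exists_sub_one_mem_and_smul_le_of_fg_of_le_sup
    (Module.Finite.fg_top.map _) le_rfl hN
  obtain ⟨q, hq⟩ := Ideal.mem_span_singleton.1 hg
  refine ⟨-q, n, fun t => ?_⟩
  obtain ⟨r, hr⟩ := Submodule.mem_one.1 (hgN (Submodule.smul_mem_pointwise_smul _ g _
    (Submodule.smul_mem_pointwise_smul t (p ^ n) ⊤ trivial)))
  refine ⟨r, ?_⟩
  rw [hr, smul_smul, Algebra.smul_def, mul_neg, sub_neg_eq_add, ← hq, add_sub_cancel]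

namespace IsTClosedExt

protected theorem subalgebra (h : IsTClosedExt R S) (T : Subalgebra R S) : IsTClosedExt R T := by
  have mem_range_iff (y : T) : y ∈ (algebraMap R T).range ↔ (y : S) ∈ (algebraMap R S).range :=
    exists_congr fun _ => Subtype.ext_iff
  intro b r h₂ h₃
  rw [mem_range_iff] at h₂ h₃ ⊢
  exact h b r h₂ h₃

theorem isRadical_extConductor (h : IsTClosedExt R S) : (extConductor R S).IsRadical := by
  refine (Ideal.isRadical_iff_pow_one_lt 2 one_lt_two).2 fun s hs t => h (s * t) 0 ?_ ?_
  · simpa [mul_pow] using hs (t ^ 2)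
  · convert hs (s * t ^ 3) using 1
    simp only [map_zero]
    ring

theorem mem_range_of_sq_sub_self_mem_extConductor (h : IsTClosedExt R S) {b : S}
    (hb : b ^ 2 - b ∈ extConductor R S) : b ∈ (algebraMap R S).range := by
  refine h b 1 ?_ ?_
  · simpa using mem_range_of_mem_extConductor hb
  · convert hb b using 1
    simp only [map_one]
    ring

theorem exists_mul_one_sub_mul_mem_extConductor [Module.Finite R S]
    [WellFoundedLT (Subalgebra R S)] (h : IsTClosedExt R S) (x : S) :
    ∃ s, x * (1 - x * s) ∈ extConductor R S := by
  obtain ⟨n, hn⟩ := exists_forall_pow_mul_sub_mem_range R x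
  obtain ⟨s, p, hp⟩ := hn (n + 2) (n.le_add_right 2) x
  replace hp : algebraMap R S p = x ^ (n + 1) * (1 - x * s) := by linear_combination hp
  obtain ⟨q, m, hq⟩ := exists_one_sub_mul_mul_pow_mem_extConductor S p
  have hpq : algebraMap R S (p * (1 - p * q)) ∈ extConductor R S := by
    refine h.isRadical_extConductor ⟨m + 1, ?_⟩
    convert Ideal.mul_mem_left _ (algebraMap R S (p * (1 - p * q) ^ m)) hq using 1
    rw [← map_pow, ← map_mul, mul_pow, pow_succ (1 - p * q)]
    ring_nf
  obtain ⟨t, ht⟩ : ∃ t, 1 - x * t = (1 - x * s) * algebraMap R S (1 - p * q) := by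
    refine ⟨s + x ^ n * (1 - x * s) ^ 2 * algebraMap R S q, ?_⟩
    simp only [map_mul, map_sub, map_one, hp]
    ring
  refine ⟨t, h.isRadical_extConductor ⟨n + 1, ?_⟩⟩
  convert Ideal.mul_mem_left _ ((1 - x * t) ^ n) hpq using 1
  rw [map_mul, hp, mul_pow, pow_succ (1 - x * t), mul_left_comm, ht]
  ring

theorem exists_mul_mem_range_and_mul_one_sub_mul_mem_range [Algebra.IsIntegral R S]
    [WellFoundedLT (Subalgebra R S)] (h : IsTClosedExt R S) (x : S) :
    ∃ s, x * s ∈ (algebraMap R S).range ∧ x * (1 - x * s) ∈ (algebraMap R S).range := by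
  let T := Algebra.adjoin R {x}
  let y : T := ⟨x, Algebra.self_mem_adjoin_singleton R x⟩
  have : Module.Finite R T :=
    Algebra.finite_adjoin_simple_of_isIntegral (Algebra.IsIntegral.isIntegral x)
  have hT : IsTClosedExt R T := h.subalgebra T
  obtain ⟨s, hs⟩ := hT.exists_mul_one_sub_mul_mem_extConductor y
  have hys : y * s ∈ (algebraMap R T).range := by
    refine hT.mem_range_of_sq_sub_self_mem_extConductor ?_
    convert Ideal.mul_mem_left _ (-s) hs using 1
    ring
  obtain ⟨b, hb⟩ := hys
  obtain ⟨c, hc⟩ := mem_range_of_mem_extConductor hs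
  exact ⟨s, ⟨b, congrArg Subtype.val hb⟩, ⟨c, congrArg Subtype.val hc⟩⟩

end IsTClosedExt

theorem comap_algebraMap_injective_of_forall_exists_mul_mem_range
    (h : ∀ x : S, ∃ s, x * s ∈ (algebraMap R S).range ∧
      x * (1 - x * s) ∈ (algebraMap R S).range) :
    Function.Injective (PrimeSpectrum.comap (algebraMap R S)) := by
  suffices key : ∀ Q₁ Q₂ : PrimeSpectrum S,
      PrimeSpectrum.comap (algebraMap R S) Q₁ = PrimeSpectrum.comap (algebraMap R S) Q₂ →
        Q₁ ≤ Q₂ from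
    fun Q₁ Q₂ hQ => le_antisymm (key Q₁ Q₂ hQ) (key Q₂ Q₁ hQ.symm)
  intro Q₁ Q₂ hQ x hx
  have mem_of_mem (r : R) : algebraMap R S r ∈ Q₁.asIdeal → algebraMap R S r ∈ Q₂.asIdeal :=
    (SetLike.ext_iff.1 (congrArg PrimeSpectrum.asIdeal hQ) r).1
  obtain ⟨s, ⟨b, hb⟩, ⟨c, hc⟩⟩ := h x
  have hx_eq : x = x * algebraMap R S b + algebraMap R S c := by
    rw [hb, hc]
    ring
  rw [hx_eq]
  refine add_mem (Ideal.mul_mem_left _ _ (mem_of_mem b ?_)) (mem_of_mem c ?_)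
  · exact hb ▸ Ideal.mul_mem_right _ _ hx
  · exact hc ▸ Ideal.mul_mem_right _ _ hx

theorem stmt_12_general (hinj : Function.Injective (algebraMap R S))
    (hdcc : WellFoundedLT (Subalgebra R S)) (hint : Algebra.IsIntegral R S)
    (htcl : IsTClosedExt R S) :
    Function.Bijective (PrimeSpectrum.comap (algebraMap R S)) := by
  have : FaithfulSMul R S := (faithfulSMul_iff_algebraMap_injective R S).2 hinj
  exact ⟨comap_algebraMap_injective_of_forall_exists_mul_mem_range
    htcl.exists_mul_mem_range_and_mul_one_sub_mul_mem_range,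
    Algebra.IsIntegral.comap_surjective R S⟩

end

/-- For an integral t-closed FCP extension `R ⊆ S`, the contraction
map `Spec S → Spec R` is bijective. -/
theorem stmt_12 {R S : Type*} [CommRing R] [CommRing S] [Algebra R S]
    (hinj : Function.Injective (algebraMap R S)) (hFCP : IsFCPExt R S)
    (hint : Algebra.IsIntegral R S) (htcl : IsTClosedExt R S) :
    Function.Bijective (PrimeSpectrum.comap (algebraMap R S)) :=
  stmt_12_general hinj (wellFoundedLT_of_forall_isChain_finite hFCP) hint htcl
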